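/- arXiv:2307.01765 — 2 statements merged into one kernel-verified Lean document; each statement's English description precedes it below -/
import Mathlib

section
/- Let (X,d) be a proper metric space, N ≥ 1, λ = (λ₁,…,λ_N) weights with λᵢ ≥ 0 and ∑λᵢ = 1, and ν₁,…,ν_N ∈ 𝒫₁(X). Then the functional F(μ) := ∑ᵢ λᵢ W₁(νᵢ,μ) attains its minimum over 𝒫₁(X), and the set Med_λ(ν₁,…,ν_N) of minimizers is a nonempty, convex, and narrowly compact subset of 𝒫₁(X). -/
open MeasureTheory Filter Topology
open scoped ENNReal NNReal

/-- The set of couplings (transport plans): Borel probability measures on `X × X`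
with first marginal `μ` and second marginal `ν`. -/
def Couplings {X : Type*} [MeasurableSpace X] (μ ν : Measure X) :
    Set (Measure (X × X)) :=
  {γ | IsProbabilityMeasure γ ∧ γ.map Prod.fst = μ ∧ γ.map Prod.snd = ν}

/-- The Wasserstein distance of order `1` between two measures on a metric space:
the infimum over couplings `γ` of `∫ d(x,y) dγ`. -/
noncomputable def W1 {X : Type*} [MetricSpace X] [MeasurableSpace X]
    (μ ν : Measure X) : ℝ :=
  (⨅ γ ∈ Couplings μ ν, ∫⁻ p, edist p.1 p.2 ∂γ).toReal

/-- `𝒫₁(X)`: Borel probability measures on `X` with finite first moment. -/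
def P1 (X : Type*) [MetricSpace X] [MeasurableSpace X] : Set (Measure X) :=
  {μ | IsProbabilityMeasure μ ∧ ∀ x₀ : X, Integrable (fun x => dist x₀ x) μ}

/-- `λ` belongs to the simplex `Δ_N`: nonnegative weights summing to `1`. -/
def memSimplex {N : ℕ} (l : Fin N → ℝ) : Prop :=
  (∀ i, 0 ≤ l i) ∧ ∑ i, l i = 1

/-- The dispersion functional `μ ↦ ∑ᵢ λᵢ W₁(νᵢ, μ)`. -/
noncomputable def medCost {X : Type*} [MetricSpace X] [MeasurableSpace X] {N : ℕ}
    (l : Fin N → ℝ) (ν : Fin N → Measure X) (μ : Measure X) : ℝ :=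
  ∑ i, l i * W1 (ν i) μ

/-- The set of Wasserstein medians of `ν₁, …, ν_N` with weights `λ`:
minimizers over `𝒫₁(X)` of the dispersion functional. -/
def Med {X : Type*} [MetricSpace X] [MeasurableSpace X] {N : ℕ}
    (l : Fin N → ℝ) (ν : Fin N → Measure X) : Set (Measure X) :=
  {μ | μ ∈ P1 X ∧ ∀ ρ ∈ P1 X, medCost l ν μ ≤ medCost l ν ρ}

theorem Couplings.convexCombination {X : Type*} [MeasurableSpace X] {μ ν₁ ν₂ : Measure X}
    {γ₁ γ₂ : Measure (X × X)} (h₁ : γ₁ ∈ Couplings μ ν₁) (h₂ : γ₂ ∈ Couplings μ ν₂) {a b : ℝ≥0}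
    (hab : a + b = 1) : a • γ₁ + b • γ₂ ∈ Couplings μ (a • ν₁ + b • ν₂) := by
  obtain ⟨hp₁, hf₁, hs₁⟩ := h₁
  obtain ⟨hp₂, hf₂, hs₂⟩ := h₂
  refine ⟨⟨?_⟩, ?_, ?_⟩
  · simp only [Measure.add_apply, Measure.smul_apply, measure_univ, ENNReal.smul_def, smul_eq_mul,
      mul_one]
    exact_mod_cast hab
  · rw [Measure.map_add _ _ measurable_fst, Measure.map_smul, Measure.map_smul, hf₁, hf₂,
      ← add_smul, hab, one_smul]
  · rw [Measure.map_add _ _ measurable_snd, Measure.map_smul, Measure.map_smul, hs₁, hs₂]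

section TransportCost

variable {X : Type*} [MetricSpace X] [MeasurableSpace X]

/-- The `ℝ≥0∞`-valued optimal transport cost, of which `W1` is the real part. -/
noncomputable def transportCost (μ ν : Measure X) : ℝ≥0∞ :=
  ⨅ γ ∈ Couplings μ ν, ∫⁻ p, edist p.1 p.2 ∂γ

theorem transportCost_le {μ ν : Measure X} {γ : Measure (X × X)} (hγ : γ ∈ Couplings μ ν) :
    transportCost μ ν ≤ ∫⁻ p, edist p.1 p.2 ∂γ :=
  iInf₂_le γ hγ

theorem toReal_transportCost (μ ν : Measure X) : (transportCost μ ν).toReal = W1 μ ν :=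
  rfl

theorem W1_nonneg (μ ν : Measure X) : 0 ≤ W1 μ ν :=
  ENNReal.toReal_nonneg

theorem medCost_nonneg {N : ℕ} {l : Fin N → ℝ} (hl : ∀ i, 0 ≤ l i) (ν : Fin N → Measure X)
    (μ : Measure X) : 0 ≤ medCost l ν μ :=
  Finset.sum_nonneg fun i _ => mul_nonneg (hl i) (W1_nonneg (ν i) μ)

/-- The `ℝ≥0∞`-valued dispersion functional. -/
noncomputable def medECost {N : ℕ} (l : Fin N → ℝ) (ν : Fin N → Measure X) (μ : Measure X) :
    ℝ≥0∞ :=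
  ∑ i, ENNReal.ofReal (l i) * transportCost (ν i) μ

theorem transportCost_le_medECost_div {N : ℕ} {l : Fin N → ℝ} (ν : Fin N → Measure X)
    (μ : Measure X) {i : Fin N} (hi : 0 < l i) :
    transportCost (ν i) μ ≤ medECost l ν μ / ENNReal.ofReal (l i) := by
  rw [ENNReal.le_div_iff_mul_le (Or.inl (ENNReal.ofReal_pos.2 hi).ne')
    (Or.inl ENNReal.ofReal_ne_top), mul_comm]
  exact Finset.single_le_sum (f := fun i => ENNReal.ofReal (l i) * transportCost (ν i) μ)
    (fun _ _ => zero_le) (Finset.mem_univ i)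

variable [BorelSpace X]

theorem mem_P1_iff_lintegral_edist_lt_top {μ : Measure X} [IsProbabilityMeasure μ] (x₀ : X) :
    μ ∈ P1 X ↔ ∫⁻ x, edist x₀ x ∂μ < ∞ := by
  have key (z : X) : Integrable (fun x => dist z x) μ ↔ ∫⁻ x, edist z x ∂μ < ∞ := by
    have hm : AEStronglyMeasurable (fun x => dist z x) μ :=
      (continuous_const.dist continuous_id).aestronglyMeasurable
    simp only [Integrable, hm, true_and, hasFiniteIntegral_iff_ofReal
      (ae_of_all _ fun x => (dist_nonneg : 0 ≤ dist z x)), edist_dist]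
  refine ⟨fun h => (key x₀).1 (h.2 x₀), fun h => ⟨inferInstance, fun z => (key z).2 ?_⟩⟩
  calc ∫⁻ x, edist z x ∂μ ≤ ∫⁻ x, (edist z x₀ + edist x₀ x) ∂μ :=
        lintegral_mono fun x => edist_triangle z x₀ x
    _ = edist z x₀ + ∫⁻ x, edist x₀ x ∂μ := by
        rw [lintegral_add_left measurable_const, lintegral_const, measure_univ, mul_one]
    _ < ∞ := ENNReal.add_lt_top.2 ⟨edist_lt_top _ _, h⟩

theorem mem_P1_of_transportCost_lt_top {μ ν : Measure X} (hμ : μ ∈ P1 X)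
    (h : transportCost μ ν < ∞) : ν ∈ P1 X := by
  simp only [transportCost, iInf_lt_iff] at h
  obtain ⟨γ, ⟨hp, rfl, rfl⟩, hγ⟩ := h
  have := hμ.1
  obtain ⟨x₀⟩ := nonempty_of_isProbabilityMeasure (γ.map Prod.fst)
  have : IsProbabilityMeasure (γ.map Prod.snd) :=
    Measure.isProbabilityMeasure_map measurable_snd.aemeasurable
  have hm : Measurable fun x : X => edist x₀ x := by fun_prop
  rw [mem_P1_iff_lintegral_edist_lt_top x₀, lintegral_map hm measurable_fst] at hμ
  rw [mem_P1_iff_lintegral_edist_lt_top x₀, lintegral_map hm measurable_snd]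
  calc ∫⁻ p, edist x₀ p.2 ∂γ ≤ ∫⁻ p, (edist x₀ p.1 + edist p.1 p.2) ∂γ :=
        lintegral_mono fun p => edist_triangle _ _ _
    _ = ∫⁻ p, edist x₀ p.1 ∂γ + ∫⁻ p, edist p.1 p.2 ∂γ :=
        lintegral_add_left (hm.comp measurable_fst) _
    _ < ∞ := ENNReal.add_lt_top.2 ⟨hμ, hγ⟩

variable [ProperSpace X]

theorem transportCost_lt_top {μ ν : Measure X} (hμ : μ ∈ P1 X) (hν : ν ∈ P1 X) :
    transportCost μ ν < ∞ := by
  have := hμ.1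
  have := hν.1
  obtain ⟨x₀⟩ := nonempty_of_isProbabilityMeasure μ
  have hγ : μ.prod ν ∈ Couplings μ ν := ⟨inferInstance, by simp, by simp⟩
  refine (transportCost_le hγ).trans_lt ?_
  have hm : Measurable fun x : X => edist x₀ x := by fun_prop
  calc ∫⁻ p, edist p.1 p.2 ∂μ.prod ν
      ≤ ∫⁻ p, (edist x₀ p.1 + edist x₀ p.2) ∂μ.prod ν :=
        lintegral_mono fun p => edist_triangle_left _ _ _
    _ = ∫⁻ x, edist x₀ x ∂μ + ∫⁻ x, edist x₀ x ∂ν := by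
        rw [lintegral_add_left (show Measurable fun p : X × X => edist x₀ p.1 by fun_prop)]
        congr 1
        · exact measurePreserving_fst.lintegral_comp hm
        · exact measurePreserving_snd.lintegral_comp hm
    _ < ∞ := ENNReal.add_lt_top.2 ⟨(mem_P1_iff_lintegral_edist_lt_top x₀).1 hμ,
        (mem_P1_iff_lintegral_edist_lt_top x₀).1 hν⟩

variable (X) in
theorem lowerSemicontinuous_lintegral_edist :
    LowerSemicontinuous fun γ : ProbabilityMeasure (X × X) =>
      ∫⁻ p, edist p.1 p.2 ∂(γ : Measure (X × X)) := by
  let f (n : ℕ) : BoundedContinuousFunction (X × X) ℝ≥0 :=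
    BoundedContinuousFunction.mkOfBound ⟨fun p => min (nndist p.1 p.2) n, by fun_prop⟩ n
      fun p q => by
        rw [NNReal.dist_eq, abs_sub_le_iff]
        have hp : ((min (nndist p.1 p.2) n : ℝ≥0) : ℝ) ≤ n := by exact_mod_cast min_le_right _ _
        have hq : ((min (nndist q.1 q.2) n : ℝ≥0) : ℝ) ≤ n := by exact_mod_cast min_le_right _ _
        have hp₀ := (min (nndist p.1 p.2) n : ℝ≥0).coe_nonneg
        have hq₀ := (min (nndist q.1 q.2) n : ℝ≥0).coe_nonneg
        simp only [ContinuousMap.coe_mk]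
        constructor <;> linarith
  have hf (n : ℕ) (p : X × X) : f n p = min (nndist p.1 p.2) n := rfl
  have hsup (p : X × X) : edist p.1 p.2 = ⨆ n, (f n p : ℝ≥0∞) := by
    refine le_antisymm ?_ (iSup_le fun n => ?_)
    · obtain ⟨n, hn⟩ := exists_nat_ge (nndist p.1 p.2)
      refine le_iSup_of_le n ?_
      rw [hf, min_eq_left hn, edist_nndist]
    · rw [hf, edist_nndist]
      exact_mod_cast min_le_left _ _
  have hmono : Monotone fun n (p : X × X) => (f n p : ℝ≥0∞) := fun m n hmn p => by
    simp only [hf]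
    gcongr
  have hlint (γ : ProbabilityMeasure (X × X)) :
      ∫⁻ p, edist p.1 p.2 ∂(γ : Measure (X × X)) = ⨆ n, ∫⁻ p, f n p ∂(γ : Measure (X × X)) := by
    simp_rw [hsup]
    exact lintegral_iSup (fun n => (f n).continuous.measurable.coe_nnreal_ennreal) hmono
  simp_rw [hlint]
  exact lowerSemicontinuous_iSup fun n =>
    (ProbabilityMeasure.continuous_lintegral_boundedContinuousFunction (f n)).lowerSemicontinuous

theorem isClosed_setOf_map_eq {Y Z : Type*} [TopologicalSpace Y] [MeasurableSpace Y]
    [OpensMeasurableSpace Y] [TopologicalSpace Z] [MeasurableSpace Z] [BorelSpace Z]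
    [HasOuterApproxClosed Z] {f : Y → Z} (hf : Continuous f) (μ : Measure Z)
    [hμ : IsProbabilityMeasure μ] :
    IsClosed {γ : ProbabilityMeasure Y | (γ : Measure Y).map f = μ} := by
  convert isClosed_eq (ProbabilityMeasure.continuous_map hf)
    (continuous_const (y := (⟨μ, hμ⟩ : ProbabilityMeasure Z))) using 2 with γ
  exact funext fun γ => propext ⟨fun h => Subtype.ext h, fun h => congrArg Subtype.val h⟩

theorem isTightMeasureSet_fst_eq_lintegral_edist_le (μ : Measure X) [IsProbabilityMeasure μ]
    (b : ℝ≥0) :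
    IsTightMeasureSet {γ : Measure (X × X) | γ.map Prod.fst = μ ∧
      ∫⁻ p, edist p.1 p.2 ∂γ ≤ b} := by
  rw [isTightMeasureSet_iff_exists_isCompact_measure_compl_le]
  intro ε hε
  have hε₂ : ε / 2 ≠ 0 := (ENNReal.half_pos hε.ne').ne'
  obtain ⟨K, hK, hμK⟩ := isTightMeasureSet_iff_exists_isCompact_measure_compl_le.1
    (isTightMeasureSet_singleton (μ := μ)) (ε / 2) (ENNReal.half_pos hε.ne')
  obtain ⟨M, hM, -⟩ := ENNReal.lt_iff_exists_nnreal_btwn.1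
    (ENNReal.div_lt_top (ENNReal.coe_ne_top (r := b)) hε₂)
  refine ⟨K ×ˢ Metric.cthickening M K, hK.prod hK.cthickening, ?_⟩
  rintro γ ⟨rfl, hγ⟩
  have hsub : (K ×ˢ Metric.cthickening M K)ᶜ ⊆
      Prod.fst ⁻¹' Kᶜ ∪ {p : X × X | (M : ℝ≥0∞) ≤ edist p.1 p.2} := by
    rintro ⟨x, y⟩ hxy
    by_cases hx : x ∈ K
    · refine Or.inr ?_
      by_contra hlt
      simp only [Set.mem_ofPred_eq, not_le] at hlt
      refine hxy ⟨hx, Metric.mem_cthickening_of_edist_le y x M K hx ?_⟩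
      rw [ENNReal.ofReal_coe_nnreal, edist_comm]
      exact hlt.le
    · exact Or.inl hx
  have hM₀ : (M : ℝ≥0∞) ≠ 0 := (pos_of_gt hM).ne'
  have hedist : Measurable fun p : X × X => edist p.1 p.2 := by fun_prop
  calc γ (K ×ˢ Metric.cthickening M K)ᶜ
      ≤ γ (Prod.fst ⁻¹' Kᶜ) + γ {p : X × X | (M : ℝ≥0∞) ≤ edist p.1 p.2} :=
        (measure_mono hsub).trans (measure_union_le _ _)
    _ ≤ ε / 2 + ε / 2 := by
        gcongr
        · rw [← Measure.map_apply measurable_fst hK.measurableSet.compl]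
          exact hμK _ rfl
        · refine (meas_ge_le_lintegral_div hedist.aemeasurable hM₀ ENNReal.coe_ne_top).trans ?_
          refine ENNReal.div_le_of_le_mul (hγ.trans ?_)
          rw [mul_comm]
          exact (ENNReal.div_le_iff_le_mul (Or.inl hε₂) (Or.inr hM₀)).1 hM.le
    _ = ε := ENNReal.add_halves ε

theorem isCompact_fst_eq_lintegral_edist_le (μ : Measure X) [IsProbabilityMeasure μ] (b : ℝ≥0) :
    IsCompact {γ : ProbabilityMeasure (X × X) | (γ : Measure (X × X)).map Prod.fst = μ ∧
      ∫⁻ p, edist p.1 p.2 ∂(γ : Measure (X × X)) ≤ b} := by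
  have hclosed := (isClosed_setOf_map_eq (Y := X × X) continuous_fst μ).inter
    ((lowerSemicontinuous_lintegral_edist X).isClosed_preimage b)
  have hcompact := isCompact_closure_of_isTightMeasureSet
    ((isTightMeasureSet_fst_eq_lintegral_edist_le μ b).subset
      (S := {(γ : Measure (X × X)) | γ ∈ {γ : ProbabilityMeasure (X × X) |
        (γ : Measure (X × X)).map Prod.fst = μ ∧
          ∫⁻ p, edist p.1 p.2 ∂(γ : Measure (X × X)) ≤ b}})
      (by rintro _ ⟨γ, hγ, rfl⟩; exact hγ))
  exact hcompact.of_isClosed_subset hclosed subset_closure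

theorem exists_coupling_of_transportCost_le {μ ν : Measure X} [IsProbabilityMeasure μ]
    [IsProbabilityMeasure ν] {b : ℝ≥0} (h : transportCost μ ν ≤ b) :
    ∃ γ ∈ Couplings μ ν, ∫⁻ p, edist p.1 p.2 ∂γ ≤ b := by
  have hcompact := (isCompact_fst_eq_lintegral_edist_le μ (b + 1)).inter_right
    (isClosed_setOf_map_eq (Y := X × X) continuous_snd ν)
  have hlt : transportCost μ ν < (b + 1 : ℝ≥0) :=
    h.trans_lt (ENNReal.coe_lt_coe.2 (lt_add_one b))
  obtain ⟨γ, ⟨hp, hfst, hsnd⟩, hγ⟩ := by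
    simpa only [transportCost, iInf_lt_iff, exists_prop] using hlt
  have hne : ({γ : ProbabilityMeasure (X × X) | (γ : Measure (X × X)).map Prod.fst = μ ∧
      ∫⁻ p, edist p.1 p.2 ∂(γ : Measure (X × X)) ≤ (b + 1 : ℝ≥0)} ∩
      {γ | (γ : Measure (X × X)).map Prod.snd = ν}).Nonempty :=
    ⟨⟨γ, hp⟩, ⟨hfst, hγ.le⟩, hsnd⟩
  obtain ⟨γ₀, ⟨⟨hfst₀, hle₀⟩, hsnd₀⟩, hmin⟩ :=
    (lowerSemicontinuous_lintegral_edist X).lowerSemicontinuousOn _ |>.exists_isMinOn hne hcompact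
  refine ⟨γ₀, ⟨inferInstance, hfst₀, hsnd₀⟩,
    (le_iInf₂ fun ρ hρ => ?_ : _ ≤ transportCost μ ν).trans h⟩
  by_cases hρb : ∫⁻ p, edist p.1 p.2 ∂ρ ≤ (b + 1 : ℝ≥0)
  · exact hmin (a := ⟨ρ, hρ.1⟩) ⟨⟨hρ.2.1, hρb⟩, hρ.2.2⟩
  · exact hle₀.trans (not_le.1 hρb).le

theorem isCompact_transportCost_le (μ : Measure X) [IsProbabilityMeasure μ] (b : ℝ≥0) :
    IsCompact {ν : ProbabilityMeasure X | transportCost μ ν ≤ b} := by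
  convert (isCompact_fst_eq_lintegral_edist_le μ b).image
    (ProbabilityMeasure.continuous_map continuous_snd) using 1
  ext ν
  constructor
  · intro h
    obtain ⟨γ, ⟨hp, hfst, hsnd⟩, hγ⟩ := exists_coupling_of_transportCost_le h
    exact ⟨⟨γ, hp⟩, ⟨hfst, hγ⟩, Subtype.ext hsnd⟩
  · rintro ⟨γ, ⟨hfst, hγ⟩, rfl⟩
    exact (transportCost_le ⟨inferInstance, hfst, rfl⟩).trans hγ

theorem lowerSemicontinuous_transportCost (μ : Measure X) [IsProbabilityMeasure μ] :
    LowerSemicontinuous fun ν : ProbabilityMeasure X => transportCost μ ν := by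
  rw [lowerSemicontinuous_iff_isClosed_preimage]
  intro b
  induction b with
  | top => simp
  | coe b => exact (isCompact_transportCost_le μ b).isClosed

theorem transportCost_convexCombination_le {μ ν₁ ν₂ : Measure X} (hμ : μ ∈ P1 X)
    (h₁ : ν₁ ∈ P1 X) (h₂ : ν₂ ∈ P1 X) {a b : ℝ≥0} (hab : a + b = 1) :
    transportCost μ (a • ν₁ + b • ν₂) ≤ a * transportCost μ ν₁ + b * transportCost μ ν₂ := by
  have := hμ.1
  have := h₁.1
  have := h₂.1
  obtain ⟨γ₁, hγ₁, hle₁⟩ := exists_coupling_of_transportCost_le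
    (ENNReal.coe_toNNReal (transportCost_lt_top hμ h₁).ne).ge
  obtain ⟨γ₂, hγ₂, hle₂⟩ := exists_coupling_of_transportCost_le
    (ENNReal.coe_toNNReal (transportCost_lt_top hμ h₂).ne).ge
  rw [ENNReal.coe_toNNReal (transportCost_lt_top hμ h₁).ne] at hle₁
  rw [ENNReal.coe_toNNReal (transportCost_lt_top hμ h₂).ne] at hle₂
  refine (transportCost_le (Couplings.convexCombination hγ₁ hγ₂ hab)).trans ?_
  rw [lintegral_add_measure, lintegral_smul_measure, lintegral_smul_measure]
  simp only [ENNReal.smul_def, smul_eq_mul]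
  gcongr

theorem P1_convexCombination {ν₁ ν₂ : Measure X} (h₁ : ν₁ ∈ P1 X) (h₂ : ν₂ ∈ P1 X) {a b : ℝ≥0}
    (hab : a + b = 1) : a • ν₁ + b • ν₂ ∈ P1 X :=
  mem_P1_of_transportCost_lt_top h₁ <|
    (transportCost_convexCombination_le h₁ h₁ h₂ hab).trans_lt <|
      ENNReal.add_lt_top.2 ⟨ENNReal.mul_lt_top ENNReal.coe_lt_top (transportCost_lt_top h₁ h₁),
        ENNReal.mul_lt_top ENNReal.coe_lt_top (transportCost_lt_top h₁ h₂)⟩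

theorem medCost_convexCombination_le {N : ℕ} {l : Fin N → ℝ} (hl : ∀ i, 0 ≤ l i)
    {ν : Fin N → Measure X} (hν : ∀ i, ν i ∈ P1 X) {μ₁ μ₂ : Measure X} (h₁ : μ₁ ∈ P1 X)
    (h₂ : μ₂ ∈ P1 X) {a b : ℝ≥0} (hab : a + b = 1) :
    medCost l ν (a • μ₁ + b • μ₂) ≤ a * medCost l ν μ₁ + b * medCost l ν μ₂ := by
  simp only [medCost, Finset.mul_sum, ← Finset.sum_add_distrib]
  refine Finset.sum_le_sum fun i _ => ?_
  have h : W1 (ν i) (a • μ₁ + b • μ₂) ≤ a * W1 (ν i) μ₁ + b * W1 (ν i) μ₂ := by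
    have hfin₁ := ENNReal.mul_ne_top (ENNReal.coe_ne_top (r := a))
      (transportCost_lt_top (hν i) h₁).ne
    have hfin₂ := ENNReal.mul_ne_top (ENNReal.coe_ne_top (r := b))
      (transportCost_lt_top (hν i) h₂).ne
    have := ENNReal.toReal_mono (ENNReal.add_ne_top.2 ⟨hfin₁, hfin₂⟩)
      (transportCost_convexCombination_le (hν i) h₁ h₂ hab)
    rwa [ENNReal.toReal_add hfin₁ hfin₂, ENNReal.toReal_mul, ENNReal.toReal_mul,
      ENNReal.coe_toReal, ENNReal.coe_toReal] at this
  linarith [mul_le_mul_of_nonneg_left h (hl i)]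

theorem medECost_eq_ofReal_medCost {N : ℕ} {l : Fin N → ℝ} (hl : ∀ i, 0 ≤ l i)
    {ν : Fin N → Measure X} (hν : ∀ i, ν i ∈ P1 X) {μ : Measure X} (hμ : μ ∈ P1 X) :
    medECost l ν μ = ENNReal.ofReal (medCost l ν μ) := by
  rw [medECost, medCost,
    ENNReal.ofReal_sum_of_nonneg fun i _ => mul_nonneg (hl i) (W1_nonneg (ν i) μ)]
  refine Finset.sum_congr rfl fun i _ => ?_
  rw [ENNReal.ofReal_mul (hl i), ← toReal_transportCost,
    ENNReal.ofReal_toReal (transportCost_lt_top (hν i) hμ).ne]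

theorem medCost_le_medCost_iff {N : ℕ} {l : Fin N → ℝ} (hl : ∀ i, 0 ≤ l i)
    {ν : Fin N → Measure X} (hν : ∀ i, ν i ∈ P1 X) {μ ρ : Measure X} (hμ : μ ∈ P1 X)
    (hρ : ρ ∈ P1 X) : medCost l ν μ ≤ medCost l ν ρ ↔ medECost l ν μ ≤ medECost l ν ρ := by
  rw [medECost_eq_ofReal_medCost hl hν hμ, medECost_eq_ofReal_medCost hl hν hρ]
  exact (ENNReal.ofReal_le_ofReal_iff (medCost_nonneg hl ν ρ)).symm

theorem lowerSemicontinuous_medECost {N : ℕ} (l : Fin N → ℝ) (ν : Fin N → Measure X)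
    [∀ i, IsProbabilityMeasure (ν i)] :
    LowerSemicontinuous fun μ : ProbabilityMeasure X => medECost l ν μ :=
  lowerSemicontinuous_sum fun i _ =>
    (ENNReal.continuous_const_mul ENNReal.ofReal_ne_top).comp_lowerSemicontinuous
      (lowerSemicontinuous_transportCost (ν i)) fun _ _ h => mul_le_mul_right h _

theorem isCompact_medECost_le {N : ℕ} {l : Fin N → ℝ} (ν : Fin N → Measure X)
    [∀ i, IsProbabilityMeasure (ν i)] {i : Fin N} (hi : 0 < l i) {b : ℝ≥0∞} (hb : b ≠ ∞) :
    IsCompact {μ : ProbabilityMeasure X | medECost l ν μ ≤ b} := by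
  have hdiv : b / ENNReal.ofReal (l i) ≠ ∞ :=
    (ENNReal.div_lt_top hb (ENNReal.ofReal_pos.2 hi).ne').ne
  refine (isCompact_transportCost_le (ν i) (b / ENNReal.ofReal (l i)).toNNReal).of_isClosed_subset
    ((lowerSemicontinuous_medECost l ν).isClosed_preimage b) fun μ hμ => ?_
  rw [Set.mem_ofPred_eq, ENNReal.coe_toNNReal hdiv]
  exact (transportCost_le_medECost_div ν μ hi).trans (ENNReal.div_le_div_right hμ _)

end TransportCost

/-- On a proper metric space, the dispersion functional
`μ ↦ ∑ᵢ λᵢ W₁(νᵢ, μ)` attains its minimum over `𝒫₁(X)`, and the set of Wasserstein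
medians is nonempty, convex, and narrowly compact (compact in the topology of
weak convergence of probability measures). -/
theorem wassersteinMedian_exists_convex_narrowlyCompact
    {X : Type*} [MetricSpace X] [ProperSpace X] [MeasurableSpace X] [BorelSpace X]
    {N : ℕ} (hN : 1 ≤ N) {l : Fin N → ℝ} (hl : memSimplex l)
    {ν : Fin N → Measure X} (hν : ∀ i, ν i ∈ P1 X) :
    (Med l ν).Nonempty ∧
      (∀ μ₁ ∈ Med l ν, ∀ μ₂ ∈ Med l ν, ∀ t : ℝ≥0, t ≤ 1 →
        (t • μ₁ + (1 - t) • μ₂ : Measure X) ∈ Med l ν) ∧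
      IsCompact {μ : ProbabilityMeasure X | (μ : Measure X) ∈ Med l ν} := by
  obtain ⟨hl₀, hl₁⟩ := hl
  have hprob (i : Fin N) : IsProbabilityMeasure (ν i) := (hν i).1
  obtain ⟨i, hi⟩ : ∃ i, 0 < l i := by
    by_contra! h
    linarith [Finset.sum_nonpos fun i (_ : i ∈ Finset.univ) => h i]
  have hfin {μ : Measure X} (hμ : μ ∈ P1 X) : medECost l ν μ ≠ ∞ := by
    rw [medECost_eq_ofReal_medCost hl₀ hν hμ]
    exact ENNReal.ofReal_ne_top
  have hmem {μ : Measure X} (hμ : medECost l ν μ < ∞) : μ ∈ P1 X :=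
    mem_P1_of_transportCost_lt_top (hν i) <| (transportCost_le_medECost_div ν μ hi).trans_lt <|
      ENNReal.div_lt_top hμ.ne (ENNReal.ofReal_pos.2 hi).ne'
  obtain ⟨μ₀, hμ₀, hmin⟩ := (lowerSemicontinuous_medECost l ν).lowerSemicontinuousOn _
    |>.exists_isMinOn (Set.nonempty_of_mem (x := ⟨ν i, hprob i⟩)
      (le_refl (medECost l ν (ν i)))) (isCompact_medECost_le ν hi (hfin (hν i)))
  have hμ₀P : (μ₀ : Measure X) ∈ P1 X := hmem (hμ₀.trans_lt (hfin (hν i)).lt_top)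
  have hglobal {ρ : Measure X} (hρ : ρ ∈ P1 X) : medECost l ν μ₀ ≤ medECost l ν ρ := by
    by_cases h : medECost l ν ρ ≤ medECost l ν (ν i)
    · exact hmin (a := ⟨ρ, hρ.1⟩) h
    · exact hμ₀.trans (not_le.1 h).le
  refine ⟨⟨μ₀, hμ₀P, fun ρ hρ => (medCost_le_medCost_iff hl₀ hν hμ₀P hρ).2 (hglobal hρ)⟩,
    fun μ₁ h₁ μ₂ h₂ t ht => ?_, ?_⟩
  · have hab : t + (1 - t) = 1 := add_tsub_cancel_of_le ht
    have hab' : (t : ℝ) + ((1 - t : ℝ≥0) : ℝ) = 1 := by exact_mod_cast hab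
    refine ⟨P1_convexCombination h₁.1 h₂.1 hab, fun ρ hρ => ?_⟩
    calc medCost l ν (t • μ₁ + (1 - t) • μ₂)
        ≤ t * medCost l ν μ₁ + (1 - t : ℝ≥0) * medCost l ν μ₂ :=
          medCost_convexCombination_le hl₀ hν h₁.1 h₂.1 hab
      _ ≤ t * medCost l ν ρ + (1 - t : ℝ≥0) * medCost l ν ρ := by
          gcongr
          · exact h₁.2 ρ hρ
          · exact h₂.2 ρ hρ
      _ = medCost l ν ρ := by rw [← add_mul, hab', one_mul]
  · convert isCompact_medECost_le ν hi (hfin hμ₀P) using 1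
    ext μ
    constructor
    · rintro ⟨hμ, hle⟩
      exact (medCost_le_medCost_iff hl₀ hν hμ hμ₀P).1 (hle _ hμ₀P)
    · intro hle
      have hμ := hmem (lt_of_le_of_lt hle (hfin hμ₀P).lt_top)
      exact ⟨hμ, fun ρ hρ =>
        (medCost_le_medCost_iff hl₀ hν hμ hρ).2 (le_trans hle (hglobal hρ))⟩
end

section
/- Let (X,d) be a proper metric space, ν₁,…,ν_N ∈ 𝒫₁(X), and λ = (λ₁,…,λ_N) ∈ Δ_N with every λᵢ > 0. Then min_{μ ∈ 𝒫₁(X)} ∑ᵢ λᵢ W₁(νᵢ,μ) = sup{∑ᵢ ∫_X uᵢ dνᵢ : uᵢ is λᵢ-Lipschitz on X for each i, and ∑ᵢ uᵢ ≤ 0 on X}, and the supremum on the right-hand side is attained. -/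
open MeasureTheory Filter Topology
open scoped ENNReal NNReal

/-! ### Lipschitz functions and first moments -/

lemma integrable_of_lipschitzWith_of_mem_P1 {X : Type*} [MetricSpace X] [MeasurableSpace X]
    [BorelSpace X] {μ : Measure X} (hμ : μ ∈ P1 X) {K : ℝ≥0} {u : X → ℝ}
    (hu : LipschitzWith K u) : Integrable u μ := by
  have := hμ.1
  obtain ⟨x₀⟩ := nonempty_of_isProbabilityMeasure μ
  refine Integrable.mono' (g := fun x => |u x₀| + K * dist x₀ x)
    ((integrable_const _).add ((hμ.2 x₀).const_mul _))
    hu.continuous.measurable.aestronglyMeasurable (ae_of_all _ fun x => ?_)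
  have h := hu.dist_le_mul x x₀
  rw [Real.dist_eq, dist_comm] at h
  have h2 := abs_sub_abs_le_abs_sub (u x) (u x₀)
  rw [Real.norm_eq_abs]
  linarith

/-- A uniformly Lipschitz sequence of families of functions on a separable space, bounded at one
point, has a pointwise convergent subsequence. -/
lemma exists_subseq_tendsto_of_lipschitzWith {X ι : Type*} [PseudoMetricSpace X]
    [TopologicalSpace.SeparableSpace X] [Countable ι] {K : ι → ℝ≥0} {w : ℕ → ι → X → ℝ}
    (hw : ∀ n i, LipschitzWith (K i) (w n i)) (x₀ : X) {B : ℝ} (hB : ∀ n i, |w n i x₀| ≤ B) :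
    ∃ (φ : ℕ → ℕ) (u : ι → X → ℝ), StrictMono φ ∧
      ∀ i x, Tendsto (fun n => w (φ n) i x) atTop (𝓝 (u i x)) := by
  have : Nonempty X := ⟨x₀⟩
  let q := TopologicalSpace.denseSeq X
  let S : Set (ι × ℕ → ℝ) := Set.pi Set.univ fun p =>
    Set.Icc (-(B + K p.1 * dist (q p.2) x₀)) (B + K p.1 * dist (q p.2) x₀)
  have hS : IsCompact S := isCompact_univ_pi fun _ => isCompact_Icc
  have hmem : ∀ n, (fun p : ι × ℕ => w n p.1 (q p.2)) ∈ S := fun n p _ => by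
    have h := (hw n p.1).dist_le_mul (q p.2) x₀
    rw [Real.dist_eq] at h
    have h2 := abs_sub_abs_le_abs_sub (w n p.1 (q p.2)) (w n p.1 x₀)
    exact abs_le.mp (by linarith [hB n p.1])
  obtain ⟨a, -, φ, hφ, ha⟩ := hS.tendsto_subseq hmem
  rw [tendsto_pi_nhds] at ha
  have hlim : ∀ i x, ∃ r, Tendsto (fun n => w (φ n) i x) atTop (𝓝 r) := fun i x => by
    refine cauchySeq_tendsto_of_complete (Metric.cauchySeq_iff.2 fun ε hε => ?_)
    have hK : (0 : ℝ) < K i + 1 := by positivity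
    obtain ⟨k, hk⟩ := (TopologicalSpace.denseRange_denseSeq X).exists_dist_lt x
      (show 0 < ε / (3 * (K i + 1)) by positivity)
    have hclose : ∀ n, |w n i x - w n i (q k)| < ε / 3 := fun n => by
      have h := (hw n i).dist_le_mul x (q k)
      rw [Real.dist_eq] at h
      refine h.trans_lt ?_
      calc (K i : ℝ) * dist x (q k) ≤ (K i + 1) * dist x (q k) := by gcongr; linarith
        _ < (K i + 1) * (ε / (3 * (K i + 1))) := by gcongr
        _ = ε / 3 := by field_simp
    obtain ⟨M, hM⟩ := Metric.cauchySeq_iff.1 (ha (i, k)).cauchySeq (ε / 3) (by positivity)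
    refine ⟨M, fun m hm n hn => ?_⟩
    have h1 := abs_lt.mp (hclose (φ m))
    have h2 := abs_lt.mp (hclose (φ n))
    have h3 := hM m hm n hn
    rw [Real.dist_eq] at h3 ⊢
    have h4 := abs_lt.mp h3
    simp only [Function.comp_apply] at h4
    exact abs_lt.mpr ⟨by linarith [h1.1, h2.2, h4.1], by linarith [h1.2, h2.1, h4.2]⟩
  choose u hu using hlim
  exact ⟨φ, u, hφ, hu⟩

lemma lipschitzWith_of_tendsto {X : Type*} [PseudoMetricSpace X] {K : ℝ≥0} {w : ℕ → X → ℝ}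
    {u : X → ℝ} (hw : ∀ n, LipschitzWith K (w n))
    (hu : ∀ x, Tendsto (fun n => w n x) atTop (𝓝 (u x))) : LipschitzWith K u :=
  LipschitzWith.of_dist_le_mul fun x y =>
    le_of_tendsto ((hu x).dist (hu y)) (Eventually.of_forall fun n => (hw n).dist_le_mul x y)

/-! ### Weak duality -/

lemma iInf_couplings_ne_top {X : Type*} [MetricSpace X] [MeasurableSpace X]
    [BorelSpace X] [SecondCountableTopology X] {μ ν : Measure X} (hμ : μ ∈ P1 X) (hν : ν ∈ P1 X) :
    (⨅ γ ∈ Couplings μ ν, ∫⁻ p, edist p.1 p.2 ∂γ) ≠ ⊤ := by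
  have := hμ.1
  have := hν.1
  obtain ⟨x₀⟩ := nonempty_of_isProbabilityMeasure μ
  have hmem : μ.prod ν ∈ Couplings μ ν :=
    ⟨inferInstance, by rw [Measure.map_fst_prod]; simp, by rw [Measure.map_snd_prod]; simp⟩
  have hfin : ∀ ρ ∈ P1 X, ∫⁻ x, edist x₀ x ∂ρ ≠ ⊤ := fun ρ hρ => by
    have h := (hρ.2 x₀).lintegral_lt_top
    simpa only [← edist_dist] using h.ne
  refine ne_top_of_le_ne_top (ENNReal.add_ne_top.2 ⟨hfin μ hμ, hfin ν hν⟩)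
    ((iInf₂_le _ hmem).trans ?_)
  calc ∫⁻ p, edist p.1 p.2 ∂μ.prod ν
      ≤ ∫⁻ p, (edist x₀ p.1 + edist x₀ p.2) ∂μ.prod ν :=
        lintegral_mono fun p => edist_triangle_left _ _ _
    _ = ∫⁻ x, edist x₀ x ∂μ + ∫⁻ y, edist x₀ y ∂ν := by
        rw [lintegral_add_left (by fun_prop)]
        congr 1
        · rw [lintegral_prod _ (by fun_prop)]
          simp
        · rw [lintegral_prod _ (by fun_prop)]
          simp

lemma integral_sub_integral_le_mul_W1 {X : Type*} [MetricSpace X] [MeasurableSpace X]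
    [BorelSpace X] [SecondCountableTopology X] {μ ν : Measure X} (hμ : μ ∈ P1 X) (hν : ν ∈ P1 X)
    {K : ℝ≥0} (hK : K ≠ 0) {u : X → ℝ} (hu : LipschitzWith K u) :
    ∫ x, u x ∂μ - ∫ x, u x ∂ν ≤ K * W1 μ ν := by
  have key : ENNReal.ofReal (∫ x, u x ∂μ - ∫ x, u x ∂ν) ≤
      K * ⨅ γ ∈ Couplings μ ν, ∫⁻ p, edist p.1 p.2 ∂γ := by
    simp_rw [ENNReal.mul_iInf_of_ne (ENNReal.coe_ne_zero.2 hK) ENNReal.coe_ne_top]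
    refine le_iInf₂ fun γ hγ => ?_
    have hμu := integrable_of_lipschitzWith_of_mem_P1 hμ hu
    have hνu := integrable_of_lipschitzWith_of_mem_P1 hν hu
    rw [← hγ.2.1] at hμu ⊢
    rw [← hγ.2.2] at hνu
    rw [show ∫ x, u x ∂ν = ∫ x, u x ∂γ.map Prod.snd by rw [hγ.2.2]]
    rw [integral_map measurable_fst.aemeasurable hμu.aestronglyMeasurable,
      integral_map measurable_snd.aemeasurable hνu.aestronglyMeasurable,
      ← integral_sub (show Integrable (fun p => u p.1) γ from hμu.comp_measurable measurable_fst)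
        (show Integrable (fun p => u p.2) γ from hνu.comp_measurable measurable_snd)]
    refine (Real.ofReal_le_enorm _).trans ((enorm_integral_le_lintegral_enorm _).trans ?_)
    rw [← lintegral_const_mul _ (by fun_prop)]
    exact lintegral_mono fun p => (edist_eq_enorm_sub (u p.1) (u p.2)).symm.trans_le
      (hu.edist_le_mul p.1 p.2)
  have hfin := iInf_couplings_ne_top hμ hν
  have h := ENNReal.toReal_mono (ENNReal.mul_ne_top ENNReal.coe_ne_top hfin) key
  rw [ENNReal.toReal_mul, ENNReal.coe_toReal, ENNReal.toReal_ofReal'] at h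
  exact (le_max_left _ _).trans h

lemma sum_integral_le_medCost {X : Type*} [MetricSpace X] [MeasurableSpace X] [BorelSpace X]
    [SecondCountableTopology X] {N : ℕ} {l : Fin N → ℝ} (hl : ∀ i, 0 < l i)
    {ν : Fin N → Measure X} (hν : ∀ i, ν i ∈ P1 X) {u : Fin N → X → ℝ}
    (hu : ∀ i, LipschitzWith (l i).toNNReal (u i)) (hu0 : ∀ x, ∑ i, u i x ≤ 0)
    {μ : Measure X} (hμ : μ ∈ P1 X) :
    ∑ i, ∫ x, u i x ∂(ν i) ≤ medCost l ν μ := by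
  have h1 : ∀ i, ∫ x, u i x ∂(ν i) ≤ l i * W1 (ν i) μ + ∫ x, u i x ∂μ := fun i => by
    have h := integral_sub_integral_le_mul_W1 (hν i) hμ
      (Real.toNNReal_pos.2 (hl i)).ne' (hu i)
    rw [Real.coe_toNNReal _ (hl i).le] at h
    linarith
  have h2 : ∑ i, ∫ x, u i x ∂μ ≤ 0 := by
    rw [← integral_finsetSum _ fun i _ => integrable_of_lipschitzWith_of_mem_P1 hμ (hu i)]
    exact integral_nonpos hu0
  calc ∑ i, ∫ x, u i x ∂(ν i) ≤ ∑ i, (l i * W1 (ν i) μ + ∫ x, u i x ∂μ) :=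
        Finset.sum_le_sum fun i _ => h1 i
    _ ≤ medCost l ν μ := by
        rw [Finset.sum_add_distrib, medCost]
        linarith

/-! ### Attainment in the dual problem -/

lemma abs_integral_sub_le_of_lipschitzWith {X : Type*} [MetricSpace X] [MeasurableSpace X]
    [BorelSpace X] {μ : Measure X} (hμ : μ ∈ P1 X) {K : ℝ≥0} {u : X → ℝ}
    (hu : LipschitzWith K u) (x₀ : X) :
    |∫ x, u x ∂μ - u x₀| ≤ K * ∫ x, dist x₀ x ∂μ := by
  have := hμ.1
  have h : ∫ x, u x ∂μ - u x₀ = ∫ x, (u x - u x₀) ∂μ := by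
    rw [integral_sub (integrable_of_lipschitzWith_of_mem_P1 hμ hu) (integrable_const _)]
    simp
  rw [h, ← integral_const_mul]
  refine abs_integral_le_integral_abs.trans
    (integral_mono_of_nonneg (ae_of_all _ fun _ => abs_nonneg _) ((hμ.2 x₀).const_mul _)
      (ae_of_all _ fun x => ?_))
  change |u x - u x₀| ≤ K * dist x₀ x
  rw [← Real.dist_eq, dist_comm x₀]
  exact hu.dist_le_mul x x₀

lemma exists_forall_sum_integral_le {X ι : Type*} [MetricSpace X]
    [TopologicalSpace.SeparableSpace X] [MeasurableSpace X] [BorelSpace X] [Fintype ι] [Nonempty ι]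
    (K : ι → ℝ≥0) {ν : ι → Measure X} (hν : ∀ i, ν i ∈ P1 X) :
    ∃ u : ι → X → ℝ, (∀ i, LipschitzWith (K i) (u i)) ∧ (∀ x, ∑ i, u i x ≤ 0) ∧
      ∀ v : ι → X → ℝ, (∀ i, LipschitzWith (K i) (v i)) → (∀ x, ∑ i, v i x ≤ 0) →
        ∑ i, ∫ x, v i x ∂(ν i) ≤ ∑ i, ∫ x, u i x ∂(ν i) := by
  have := fun i => (hν i).1
  obtain ⟨x₀⟩ := nonempty_of_isProbabilityMeasure (ν (Classical.arbitrary ι))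
  let A : Set (ι → X → ℝ) := {v | (∀ i, LipschitzWith (K i) (v i)) ∧ ∀ x, ∑ i, v i x ≤ 0}
  let J : (ι → X → ℝ) → ℝ := fun v => ∑ i, ∫ x, v i x ∂(ν i)
  let C : ℝ := ∑ i, K i * ∫ x, dist x₀ x ∂(ν i)
  have hJ : ∀ v ∈ A, J v ≤ ∑ i, v i x₀ + C := fun v hv => by
    rw [← Finset.sum_add_distrib]
    refine Finset.sum_le_sum fun i _ => ?_
    linarith [(abs_le.1 (abs_integral_sub_le_of_lipschitzWith (hν i) (hv.1 i) x₀)).2]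
  have hbdd : BddAbove (J '' A) := by
    refine ⟨C, ?_⟩
    rintro _ ⟨v, hv, rfl⟩
    linarith [hJ v hv, hv.2 x₀]
  have hne : (J '' A).Nonempty :=
    ⟨J 0, 0, ⟨fun i => LipschitzWith.const' 0 |>.weaken zero_le, by simp⟩, rfl⟩
  have hmax : ∀ n : ℕ, ∃ v ∈ A, sSup (J '' A) - 1 / (n + 1 : ℝ) < J v := fun n => by
    obtain ⟨_, ⟨v, hv, rfl⟩, h⟩ := exists_lt_of_lt_csSup hne
      (sub_lt_self (sSup (J '' A)) (Nat.one_div_pos_of_nat (n := n)))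
    exact ⟨v, hv, h⟩
  choose v hvA hvJ using hmax
  -- Redistribute the values at `x₀` evenly over the components.
  let s : ℕ → ℝ := fun n => ∑ i, v n i x₀
  let w : ℕ → ι → X → ℝ := fun n i x => v n i x - v n i x₀ + s n / Fintype.card ι
  have hcard : (0 : ℝ) < Fintype.card ι := by exact_mod_cast Fintype.card_pos
  have hwL : ∀ n i, LipschitzWith (K i) (w n i) := fun n i =>
    LipschitzWith.of_dist_le_mul fun x y => by
      simpa [w] using ((hvA n).1 i).dist_le_mul x y
  have hw0 : ∀ n x, ∑ i, w n i x ≤ 0 := fun n x => by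
    have h : ∑ i, w n i x = ∑ i, v n i x := by
      simp only [w, Finset.sum_add_distrib, Finset.sum_sub_distrib, Finset.sum_const,
        Finset.card_univ, nsmul_eq_mul, s]
      field_simp
      ring
    exact h.trans_le ((hvA n).2 x)
  have hwJ : ∀ n, J (w n) = J (v n) := fun n => by
    have h : ∀ i, ∫ x, w n i x ∂(ν i) =
        ∫ x, v n i x ∂(ν i) - v n i x₀ + s n / Fintype.card ι := fun i => by
      have hi := integrable_of_lipschitzWith_of_mem_P1 (hν i) ((hvA n).1 i)
      have hi' : Integrable (fun x => v n i x - v n i x₀) (ν i) := hi.sub (integrable_const _)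
      simp only [w]
      rw [integral_add hi' (integrable_const _), integral_sub hi (integrable_const _)]
      simp
    simp only [J, h, Finset.sum_add_distrib, Finset.sum_sub_distrib, Finset.sum_const,
        Finset.card_univ, nsmul_eq_mul, s]
    field_simp
    ring
  let B : ℝ := |sSup (J '' A) - 1 - C| / Fintype.card ι
  have hB : ∀ n i, |w n i x₀| ≤ B := fun n i => by
    have h1 : s n ≤ 0 := (hvA n).2 x₀
    have h2 : sSup (J '' A) - 1 - C ≤ s n := by
      have h3 := hJ _ (hvA n)
      have h4 := hvJ n
      have h5 : 1 / (n + 1 : ℝ) ≤ 1 := by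
        rw [div_le_one (by positivity)]
        linarith [n.cast_nonneg (α := ℝ)]
      simp only [s]
      linarith
    simp only [w, sub_self, zero_add, abs_div, B, Nat.abs_cast]
    gcongr ?_ / _
    rw [abs_of_nonpos h1, abs_of_nonpos (h2.trans h1)]
    linarith
  obtain ⟨φ, u, hφ, hu⟩ := exists_subseq_tendsto_of_lipschitzWith hwL x₀ hB
  have hlim : Tendsto (fun n => J (w (φ n))) atTop (𝓝 (J u)) := by
    refine tendsto_finsetSum _ fun i _ => tendsto_integral_of_dominated_convergence
      (fun x => B + K i * dist x₀ x)
      (fun n => (hwL (φ n) i).continuous.measurable.aestronglyMeasurable)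
      ((integrable_const _).add (((hν i).2 x₀).const_mul _))
      (fun n => ae_of_all _ fun x => ?_) (ae_of_all _ fun x => hu i x)
    have h := (hwL (φ n) i).dist_le_mul x x₀
    rw [Real.dist_eq, dist_comm] at h
    have h2 := abs_sub_abs_le_abs_sub (w (φ n) i x) (w (φ n) i x₀)
    rw [Real.norm_eq_abs]
    linarith [hB (φ n) i]
  have hsup : sSup (J '' A) ≤ J u := by
    have hlow : Tendsto (fun n => sSup (J '' A) - 1 / ((φ n : ℕ) + 1 : ℝ)) atTop
        (𝓝 (sSup (J '' A) - 0)) :=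
      tendsto_const_nhds.sub (tendsto_one_div_add_atTop_nhds_zero_nat.comp hφ.tendsto_atTop)
    rw [sub_zero] at hlow
    exact le_of_tendsto_of_tendsto' hlow hlim fun n => by rw [hwJ]; exact (hvJ _).le
  refine ⟨u, fun i => lipschitzWith_of_tendsto (fun n => hwL (φ n) i) (hu i), fun x => ?_,
    fun z hz hz0 => (le_csSup hbdd ⟨z, ⟨hz, hz0⟩, rfl⟩).trans hsup⟩
  exact le_of_tendsto' (tendsto_finsetSum _ fun i _ => hu i x) fun n => hw0 (φ n) x

/-! ### Strong duality -/

/-- `DualBound l ν D f c`: a dual certificate that `∑ᵢ ∫ fᵢ dγᵢ ≤ c` for all plans `γᵢ` with first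
marginals `νᵢ`, a common second marginal, and total weighted cost at most `D`. -/
def DualBound {X ι : Type*} [MetricSpace X] [MeasurableSpace X] [Fintype ι] (l : ι → ℝ)
    (ν : ι → Measure X) (D : ℝ) (f : ι → X × X → ℝ) (c : ℝ) : Prop :=
  ∃ (a b : ι → X → ℝ) (t : ℝ), 0 ≤ t ∧ (∀ i, Integrable (a i) (ν i)) ∧ (∀ y, ∑ i, b i y ≤ 0) ∧
    (∀ i p, f i p ≤ a i p.1 + b i p.2 + t * (l i * dist p.1 p.2)) ∧
    ∑ i, ∫ x, a i x ∂(ν i) + t * D ≤ c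

namespace DualBound

variable {X ι : Type*} [MetricSpace X] [MeasurableSpace X] [Fintype ι] {l : ι → ℝ}
  {ν : ι → Measure X} {D : ℝ} {f g : ι → X × X → ℝ} {c c' : ℝ}

lemma zero : DualBound l ν D 0 0 :=
  ⟨0, 0, 0, le_rfl, fun _ => integrable_zero _ _ _, by simp, by simp, by simp⟩

lemma add (hf : DualBound l ν D f c) (hg : DualBound l ν D g c') :
    DualBound l ν D (f + g) (c + c') := by
  obtain ⟨a, b, t, ht, ha, hb, hab, hc⟩ := hf
  obtain ⟨a', b', t', ht', ha', hb', hab', hc'⟩ := hg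
  refine ⟨a + a', b + b', t + t', by positivity, fun i => (ha i).add (ha' i), fun y => ?_,
    fun i p => ?_, ?_⟩
  · simp only [Pi.add_apply, Finset.sum_add_distrib]
    linarith [hb y, hb' y]
  · simp only [Pi.add_apply]
    linarith [hab i p, hab' i p]
  · simp only [Pi.add_apply, integral_add (ha _) (ha' _), Finset.sum_add_distrib]
    linarith

lemma smul {r : ℝ} (hr : 0 ≤ r) (hf : DualBound l ν D f c) :
    DualBound l ν D (r • f) (r * c) := by
  obtain ⟨a, b, t, ht, ha, hb, hab, hc⟩ := hf
  refine ⟨r • a, r • b, r * t, by positivity, fun i => (ha i).smul r, fun y => ?_,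
    fun i p => ?_, ?_⟩
  · simp only [Pi.smul_apply, smul_eq_mul, ← Finset.mul_sum]
    exact mul_nonpos_of_nonneg_of_nonpos hr (hb y)
  · simp only [Pi.smul_apply, smul_eq_mul]
    linarith [mul_le_mul_of_nonneg_left (hab i p) hr]
  · simp only [Pi.smul_apply, smul_eq_mul, integral_const_mul, ← Finset.mul_sum]
    linarith [mul_le_mul_of_nonneg_left hc hr]

/-- The zero function has no negative dual bound when `D` bounds the Lipschitz dual problem. -/
lemma nonneg [BorelSpace X] [Nonempty X] (hl : ∀ i, 0 < l i) (hν : ∀ i, ν i ∈ P1 X)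
    (hD : ∀ v : ι → X → ℝ, (∀ i, LipschitzWith (l i).toNNReal (v i)) → (∀ x, ∑ i, v i x ≤ 0) →
      ∑ i, ∫ x, v i x ∂(ν i) ≤ D)
    (h : DualBound l ν D 0 c) : 0 ≤ c := by
  obtain ⟨a, b, t, ht, ha, hb, hab, hc⟩ := h
  have := fun i => (hν i).1
  refine le_trans ?_ hc
  obtain rfl | ht := ht.eq_or_lt
  · have h : ∀ i, -b i (Classical.arbitrary X) ≤ ∫ x, a i x ∂(ν i) := fun i => by
      have h := integral_mono (integrable_const (-b i (Classical.arbitrary X))) (ha i) fun x => by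
        have := hab i (x, Classical.arbitrary X)
        simp only [Pi.zero_apply, zero_mul, add_zero] at this
        linarith
      simpa using h
    have h2 := Finset.sum_le_sum fun i (_ : i ∈ Finset.univ) => h i
    rw [Finset.sum_neg_distrib] at h2
    linarith [hb (Classical.arbitrary X)]
  · let u : ι → X → ℝ := fun i x => ⨅ y, (t⁻¹ * b i y + l i * dist x y)
    have hge : ∀ i x y, -(t⁻¹ * a i x) ≤ t⁻¹ * b i y + l i * dist x y := fun i x y => by
      have h := mul_le_mul_of_nonneg_left (hab i (x, y)) (inv_nonneg.2 ht.le)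
      simp only [Pi.zero_apply, mul_zero, mul_add, inv_mul_cancel_left₀ ht.ne'] at h
      linarith
    have hbdd : ∀ i x, BddBelow (Set.range fun y => t⁻¹ * b i y + l i * dist x y) := fun i x =>
      ⟨-(t⁻¹ * a i x), by rintro _ ⟨y, rfl⟩; exact hge i x y⟩
    have hua : ∀ i x, -(t⁻¹ * a i x) ≤ u i x := fun i x => le_ciInf (hge i x)
    have hub : ∀ i x, u i x ≤ t⁻¹ * b i x := fun i x => by
      simpa using ciInf_le (hbdd i x) x
    have huL : ∀ i, LipschitzWith (l i).toNNReal (u i) := fun i =>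
      LipschitzWith.of_le_add_mul _ fun x y => by
        rw [Real.coe_toNNReal _ (hl i).le, ← sub_le_iff_le_add]
        refine le_ciInf fun z => ?_
        have h1 := ciInf_le (hbdd i x) z
        have h2 := mul_le_mul_of_nonneg_left (dist_triangle x y z) (hl i).le
        simp only [u]
        linarith
    have hu0 : ∀ x, ∑ i, u i x ≤ 0 := fun x =>
      (Finset.sum_le_sum fun i _ => hub i x).trans <| by
        rw [← Finset.mul_sum]
        exact mul_nonpos_of_nonneg_of_nonpos (inv_nonneg.2 ht.le) (hb x)
    have h1 : ∀ i, -(t⁻¹ * ∫ x, a i x ∂(ν i)) ≤ ∫ x, u i x ∂(ν i) := fun i => by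
      rw [← integral_const_mul, ← integral_neg]
      exact integral_mono ((ha i).const_mul _).neg
        (integrable_of_lipschitzWith_of_mem_P1 (hν i) (huL i)) (hua i)
    have h2 := (Finset.sum_le_sum fun i (_ : i ∈ Finset.univ) => h1 i).trans (hD u huL hu0)
    rw [Finset.sum_neg_distrib, ← Finset.mul_sum] at h2
    have h3 := mul_le_mul_of_nonneg_left h2 ht.le
    rw [mul_neg, mul_inv_cancel_left₀ ht.ne'] at h3
    linarith

lemma of_forall_le [∀ i, IsProbabilityMeasure (ν i)] {B : ι → ℝ} (hf : ∀ i p, f i p ≤ B i) :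
    DualBound l ν D f (∑ i, B i) :=
  ⟨fun i _ => B i, 0, 0, le_rfl, fun _ => integrable_const _, by simp, by simpa using hf, by simp⟩

lemma mono (hf : DualBound l ν D f c) (h : ∀ i p, g i p ≤ f i p) : DualBound l ν D g c := by
  obtain ⟨a, b, t, ht, ha, hb, hab, hc⟩ := hf
  exact ⟨a, b, t, ht, ha, hb, fun i p => (h i p).trans (hab i p), hc⟩

lemma const_mul_dist (hl : ∀ i, 0 < l i) (hν : ∀ i, ν i ∈ P1 X) (x₀ : X) {B : ι → ℝ}
    (hB : ∀ i, 0 ≤ B i) : ∃ c, DualBound l ν D (fun i p => B i * dist (x₀, x₀) p) c := by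
  have hsum : ∀ i, B i ≤ (∑ j, B j / l j) * l i := fun i => by
    rw [← div_le_iff₀ (hl i)]
    exact Finset.single_le_sum (f := fun j => B j / l j)
      (fun j _ => div_nonneg (hB j) (hl j).le) (Finset.mem_univ i)
  refine ⟨_, fun i x => B i * dist x₀ x, 0, ∑ j, B j / l j,
    Finset.sum_nonneg fun j _ => div_nonneg (hB j) (hl j).le,
    fun i => ((hν i).2 x₀).const_mul _, by simp, fun i p => ?_, le_rfl⟩
  have h : dist (x₀, x₀) p ≤ dist x₀ p.1 + dist p.1 p.2 :=
    max_le (le_add_of_nonneg_right dist_nonneg) (dist_triangle _ _ _)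
  calc B i * dist (x₀, x₀) p ≤ B i * dist x₀ p.1 + B i * dist p.1 p.2 := by
        rw [← mul_add]
        exact mul_le_mul_of_nonneg_left h (hB i)
    _ ≤ B i * dist x₀ p.1 + (∑ j, B j / l j) * l i * dist p.1 p.2 := by
        gcongr
        exact hsum i
    _ = _ := by simp; ring

end DualBound

open CompactlySupported in
/-- A Hahn–Banach extension: a linear functional on families of compactly supported functions that
respects all dual bounds. -/
lemma exists_linearMap_forall_dualBound {X ι : Type*} [MetricSpace X] [MeasurableSpace X]
    [BorelSpace X] [Nonempty X] [Fintype ι] {l : ι → ℝ} (hl : ∀ i, 0 < l i) {ν : ι → Measure X}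
    (hν : ∀ i, ν i ∈ P1 X) {D : ℝ}
    (hD : ∀ v : ι → X → ℝ, (∀ i, LipschitzWith (l i).toNNReal (v i)) → (∀ x, ∑ i, v i x ≤ 0) →
      ∑ i, ∫ x, v i x ∂(ν i) ≤ D) :
    ∃ L : (ι → C_c(X × X, ℝ)) →ₗ[ℝ] ℝ, ∀ (f : ι → C_c(X × X, ℝ)) (c : ℝ),
      DualBound l ν D (fun i => f i) c → L f ≤ c := by
  have := fun i => (hν i).1
  let s : PointedCone ℝ ((ι → C_c(X × X, ℝ)) × ℝ) :=
    { carrier := {q | DualBound l ν D (fun i => q.1 i) q.2}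
      add_mem' := fun hp hq => DualBound.add hp hq
      zero_mem' := DualBound.zero
      smul_mem' := fun r _ hq => DualBound.smul r.2 hq }
  let F : (ι → C_c(X × X, ℝ)) × ℝ →ₗ.[ℝ] ℝ := (LinearMap.snd ℝ (ι → C_c(X × X, ℝ)) ℝ).toPMap
    (LinearMap.ker (LinearMap.fst ℝ (ι → C_c(X × X, ℝ)) ℝ))
  have hF : ∀ x : F.domain, (x : (ι → C_c(X × X, ℝ)) × ℝ) ∈ s → 0 ≤ F x := by
    rintro ⟨⟨f, c⟩, hf⟩ hs
    obtain rfl : f = 0 := hf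
    exact DualBound.nonneg hl hν hD hs
  have hdense : ∀ y, ∃ x : F.domain, (x : (ι → C_c(X × X, ℝ)) × ℝ) + y ∈ s := by
    rintro ⟨f, c⟩
    have hbdd : ∀ i, ∃ B : ℝ, ∀ p, f i p ≤ B := fun i => by
      obtain ⟨B, hB⟩ := (f i).hasCompactSupport.exists_bound_of_continuous (f i).continuous
      exact ⟨B, fun p => (le_abs_self _).trans (hB p)⟩
    choose B hB using hbdd
    refine ⟨⟨(0, ∑ i, B i - c), rfl⟩, ?_⟩
    have h : DualBound l ν D (fun i => f i) (∑ i, B i) := DualBound.of_forall_le hB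
    change DualBound l ν D (fun i => ((0 : ι → C_c(X × X, ℝ)) + f) i) (∑ i, B i - c + c)
    simpa using h
  obtain ⟨G, hGF, hG⟩ := riesz_extension s F hF hdense
  refine ⟨-(G ∘ₗ LinearMap.inl ℝ _ ℝ), fun f c hf => ?_⟩
  have h1 : 0 ≤ G (f, c) := hG (f, c) hf
  have h2 : G (0, c) = c := hGF ⟨(0, c), rfl⟩
  have h3 : G (f, c) = G (f, 0) + G (0, c) := by rw [← map_add]; simp
  simp only [LinearMap.neg_apply, LinearMap.comp_apply, LinearMap.inl_apply]
  linarith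

/-- A cutoff function supported in the closed ball of radius `n + 1`. -/
noncomputable def cutoff {Y : Type*} [PseudoMetricSpace Y] (y₀ : Y) (n : ℕ) (y : Y) : ℝ :=
  max 0 (1 - (n + 1 : ℝ)⁻¹ * dist y₀ y)

section cutoff

variable {Y : Type*} [PseudoMetricSpace Y] (y₀ : Y)

lemma continuous_cutoff (n : ℕ) : Continuous (cutoff y₀ n) := by
  unfold cutoff
  fun_prop

lemma cutoff_nonneg (n : ℕ) (y : Y) : 0 ≤ cutoff y₀ n y := le_max_left _ _

lemma cutoff_le_one (n : ℕ) (y : Y) : cutoff y₀ n y ≤ 1 :=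
  max_le zero_le_one (sub_le_self _ (by positivity))

lemma one_sub_cutoff_le (n : ℕ) (y : Y) : 1 - cutoff y₀ n y ≤ (n + 1 : ℝ)⁻¹ * dist y₀ y := by
  have h : 1 - (n + 1 : ℝ)⁻¹ * dist y₀ y ≤ cutoff y₀ n y := le_max_right _ _
  linarith

lemma hasCompactSupport_cutoff [ProperSpace Y] (n : ℕ) : HasCompactSupport (cutoff y₀ n) := by
  refine HasCompactSupport.of_support_subset_isCompact (isCompact_closedBall y₀ (n + 1))
    fun y hy => ?_
  by_contra h
  rw [Metric.mem_closedBall, not_le, dist_comm] at h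
  refine hy (max_eq_left ?_)
  rw [sub_nonpos, ← div_eq_inv_mul, one_le_div (by positivity)]
  exact h.le

lemma tendsto_cutoff (y : Y) : Tendsto (fun n => cutoff y₀ n y) atTop (𝓝 1) := by
  have h : Tendsto (fun n : ℕ => max 0 (1 - (n + 1 : ℝ)⁻¹ * dist y₀ y)) atTop
      (𝓝 (max 0 (1 - 0 * dist y₀ y))) := by
    have h0 := tendsto_one_div_add_atTop_nhds_zero_nat (𝕜 := ℝ)
    simp only [one_div] at h0
    exact tendsto_const_nhds.max (tendsto_const_nhds.sub (h0.mul_const _))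
  simpa [cutoff] using h

/-- A measure for which compactly supported functions with values in `[0, 1]` have uniformly
bounded integrals is finite. -/
lemma isFiniteMeasure_of_forall_integral_cutoff_le [ProperSpace Y] [MeasurableSpace Y]
    [BorelSpace Y] {γ : Measure Y} [IsFiniteMeasureOnCompacts γ] {C : ℝ}
    (h : ∀ n, ∫ y, cutoff y₀ n y ∂γ ≤ C) : IsFiniteMeasure γ := by
  refine ⟨lt_of_le_of_lt ?_ (ENNReal.ofReal_lt_top (r := C))⟩
  have hn : ∀ n, ∫⁻ y, ENNReal.ofReal (cutoff y₀ n y) ∂γ ≤ ENNReal.ofReal C := fun n => by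
    rw [← ofReal_integral_eq_lintegral_ofReal
      ((continuous_cutoff y₀ n).integrable_of_hasCompactSupport (hasCompactSupport_cutoff y₀ n))
      (ae_of_all _ (cutoff_nonneg y₀ n))]
    exact ENNReal.ofReal_le_ofReal (h n)
  calc γ Set.univ = ∫⁻ y, liminf (fun n => ENNReal.ofReal (cutoff y₀ n y)) atTop ∂γ := by
        rw [← lintegral_one]
        refine lintegral_congr fun y => ?_
        simpa using (ENNReal.tendsto_ofReal (tendsto_cutoff y₀ y)).liminf_eq.symm
    _ ≤ liminf (fun n => ∫⁻ y, ENNReal.ofReal (cutoff y₀ n y) ∂γ) atTop :=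
        lintegral_liminf_le fun n => (continuous_cutoff y₀ n).measurable.ennreal_ofReal
    _ ≤ ENNReal.ofReal C := by
        refine (liminf_le_liminf (Eventually.of_forall hn)).trans ?_
        simp

end cutoff

open CompactlySupported BoundedContinuousFunction in
/-- Riesz representation of the functional of `exists_linearMap_forall_dualBound`: the linear cost
term prevents mass from escaping to infinity. -/
lemma exists_measure_forall_dualBound {X ι : Type*} [MetricSpace X] [ProperSpace X]
    [MeasurableSpace X] [BorelSpace X] [Nonempty X] [Fintype ι] {l : ι → ℝ} (hl : ∀ i, 0 < l i)
    {ν : ι → Measure X} (hν : ∀ i, ν i ∈ P1 X) {D : ℝ}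
    (hD : ∀ v : ι → X → ℝ, (∀ i, LipschitzWith (l i).toNNReal (v i)) → (∀ x, ∑ i, v i x ≤ 0) →
      ∑ i, ∫ x, v i x ∂(ν i) ≤ D) :
    ∃ γ : ι → Measure (X × X), (∀ i, IsFiniteMeasure (γ i)) ∧
      ∀ (f : ι → X × X →ᵇ ℝ) (c : ℝ), DualBound l ν D (fun i => f i) c →
        ∑ i, ∫ p, f i p ∂(γ i) ≤ c := by
  classical
  have := fun i => (hν i).1
  obtain ⟨L, hL⟩ := exists_linearMap_forall_dualBound hl hν hD
  have hsingle : ∀ i (φ : C_c(X × X, ℝ)) (B : ℝ), (∀ p, φ p ≤ B) → L (Pi.single i φ) ≤ B :=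
    fun i φ B hφ => by
      have h := hL (Pi.single i φ) _ (DualBound.of_forall_le (B := Pi.single i B) fun j p => by
        obtain rfl | hj := eq_or_ne j i
        · simpa using hφ p
        · simp [hj])
      simpa using h
  let Λ : ι → C_c(X × X, ℝ) →ₚ[ℝ] ℝ := fun i =>
    PositiveLinearMap.mk₀ (L ∘ₗ LinearMap.single ℝ (fun _ : ι => C_c(X × X, ℝ)) i) fun φ hφ => by
      have h := hsingle i (-φ) 0 fun p => by simpa using hφ p
      rw [Pi.single_neg, map_neg] at h
      simpa using h
  let γ : ι → Measure (X × X) := fun i => RealRMK.rieszMeasure (Λ i)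
  have hγ : ∀ i (φ : C_c(X × X, ℝ)), ∫ p, φ p ∂(γ i) = L (Pi.single i φ) := fun i φ =>
    RealRMK.integral_rieszMeasure (Λ i) φ
  have x₀ : X := Classical.arbitrary X
  have hfin : ∀ i, IsFiniteMeasure (γ i) := fun i =>
    isFiniteMeasure_of_forall_integral_cutoff_le (x₀, x₀) (C := 1) fun n =>
      (hγ i ⟨⟨cutoff (x₀, x₀) n, continuous_cutoff _ n⟩, hasCompactSupport_cutoff _ n⟩).trans_le
        (hsingle i _ 1 (cutoff_le_one _ n))
  refine ⟨γ, hfin, fun f c hf => ?_⟩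
  obtain ⟨C, hC⟩ := DualBound.const_mul_dist (D := D) hl hν x₀ (fun i => norm_nonneg (f i))
  have hn : ∀ n : ℕ, ∑ i, ∫ p, f i p * cutoff (x₀, x₀) n p ∂(γ i) ≤ c + (n + 1 : ℝ)⁻¹ * C :=
    fun n => by
      let g : ι → C_c(X × X, ℝ) := fun i =>
        ⟨⟨fun p => f i p * cutoff (x₀, x₀) n p, (f i).continuous.mul (continuous_cutoff _ n)⟩,
          (hasCompactSupport_cutoff _ n).mul_left⟩
      have hg : DualBound l ν D (fun i => g i) (c + (n + 1 : ℝ)⁻¹ * C) := by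
        refine (hf.add (hC.smul (inv_nonneg.2 (by positivity)))).mono fun i p => ?_
        have h1 : -f i p ≤ ‖f i‖ := (neg_le_abs _).trans ((f i).norm_coe_le_norm p)
        have h2 := mul_le_mul_of_nonneg_right h1 (sub_nonneg.2 (cutoff_le_one (x₀, x₀) n p))
        have h3 := mul_le_mul_of_nonneg_left (one_sub_cutoff_le (x₀, x₀) n p) (norm_nonneg (f i))
        change f i p * cutoff (x₀, x₀) n p ≤
          f i p + (n + 1 : ℝ)⁻¹ * (‖f i‖ * dist (x₀, x₀) p)
        linarith
      calc ∑ i, ∫ p, f i p * cutoff (x₀, x₀) n p ∂(γ i) = ∑ i, L (Pi.single i (g i)) :=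
            Finset.sum_congr rfl fun i _ => hγ i (g i)
        _ = L g := by rw [← map_sum, Finset.univ_sum_single]
        _ ≤ _ := hL g _ hg
  have hlim : Tendsto (fun n => ∑ i, ∫ p, f i p * cutoff (x₀, x₀) n p ∂(γ i)) atTop
      (𝓝 (∑ i, ∫ p, f i p ∂(γ i))) := by
    refine tendsto_finsetSum _ fun i _ => tendsto_integral_of_dominated_convergence
      (fun _ => ‖f i‖)
      (fun n => ((f i).continuous.mul (continuous_cutoff _ n)).measurable.aestronglyMeasurable)
      (integrable_const _) (fun n => ae_of_all _ fun p => ?_) (ae_of_all _ fun p => ?_)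
    · rw [norm_mul, Real.norm_of_nonneg (cutoff_nonneg _ n p)]
      exact (mul_le_of_le_one_right (norm_nonneg _) (cutoff_le_one _ n p)).trans
        ((f i).norm_coe_le_norm p)
    · simpa using (tendsto_cutoff (x₀, x₀) p).const_mul (f i p)
  have hlim' : Tendsto (fun n : ℕ => c + (n + 1 : ℝ)⁻¹ * C) atTop (𝓝 (c + 0 * C)) := by
    have h0 := tendsto_one_div_add_atTop_nhds_zero_nat (𝕜 := ℝ)
    simp only [one_div] at h0
    exact tendsto_const_nhds.add (h0.mul_const _)
  simpa using le_of_tendsto_of_tendsto' hlim hlim' hn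

open BoundedContinuousFunction in
lemma exists_mem_P1_medCost_le {X : Type*} [MetricSpace X] [ProperSpace X]
    [MeasurableSpace X] [BorelSpace X] {N : ℕ} (hN : 1 ≤ N) {l : Fin N → ℝ} (hl : ∀ i, 0 < l i)
    {ν : Fin N → Measure X} (hν : ∀ i, ν i ∈ P1 X) {D : ℝ}
    (hD : ∀ v : Fin N → X → ℝ, (∀ i, LipschitzWith (l i).toNNReal (v i)) →
      (∀ x, ∑ i, v i x ≤ 0) → ∑ i, ∫ x, v i x ∂(ν i) ≤ D) :
    ∃ μ ∈ P1 X, medCost l ν μ ≤ D := by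
  have := fun i => (hν i).1
  let i₀ : Fin N := ⟨0, hN⟩
  have : Nonempty X := nonempty_of_isProbabilityMeasure (ν i₀)
  have hD0 : 0 ≤ D := by
    simpa using hD 0 (fun i => (LipschitzWith.const' 0).weaken zero_le) (by simp)
  obtain ⟨γ, hfin, hγ⟩ := exists_measure_forall_dualBound hl hν hD
  have hfst_le : ∀ i (ψ : X →ᵇ ℝ), ∫ p, ψ p.1 ∂(γ i) ≤ ∫ x, ψ x ∂(ν i) := fun i ψ => by
    have h := hγ (fun k => (Pi.single i 1 : Fin N → ℝ) k • ψ.compContinuous ⟨Prod.fst, by fun_prop⟩)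
      (∫ x, ψ x ∂(ν i)) ⟨fun k x => (Pi.single i 1 : Fin N → ℝ) k * ψ x, 0, 0, le_rfl,
        fun k => (ψ.integrable (ν k)).const_mul _, by simp, by simp,
        by simp only [integral_const_mul]; simp [Pi.single_apply]⟩
    simp only [BoundedContinuousFunction.coe_smul, smul_eq_mul, integral_const_mul] at h
    simpa [Pi.single_apply] using h
  have hfst : ∀ i, (γ i).map Prod.fst = ν i := fun i => by
    refine ext_of_forall_integral_eq_of_IsFiniteMeasure fun ψ => ?_
    rw [integral_map measurable_fst.aemeasurable ψ.continuous.measurable.aestronglyMeasurable]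
    refine le_antisymm (hfst_le i ψ) ?_
    have h := hfst_le i (-ψ)
    simp only [BoundedContinuousFunction.coe_neg, Pi.neg_apply, integral_neg] at h
    linarith
  have hsnd_le : ∀ i j (ψ : X →ᵇ ℝ), ∫ p, ψ p.2 ∂(γ i) ≤ ∫ p, ψ p.2 ∂(γ j) := fun i j ψ => by
    have h := hγ (fun k => (Pi.single i 1 - Pi.single j 1 : Fin N → ℝ) k •
        ψ.compContinuous ⟨Prod.snd, by fun_prop⟩)
      0 ⟨0, fun k x => (Pi.single i 1 - Pi.single j 1 : Fin N → ℝ) k * ψ x, 0, le_rfl,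
        fun k => integrable_zero _ _ _, fun y => by simp [sub_mul, Pi.single_apply], by simp,
        by simp⟩
    simp only [BoundedContinuousFunction.coe_smul, smul_eq_mul, integral_const_mul] at h
    simpa [sub_mul, Pi.single_apply] using h
  have hsnd : ∀ i, (γ i).map Prod.snd = (γ i₀).map Prod.snd := fun i => by
    refine ext_of_forall_integral_eq_of_IsFiniteMeasure fun ψ => ?_
    rw [integral_map measurable_snd.aemeasurable ψ.continuous.measurable.aestronglyMeasurable,
      integral_map measurable_snd.aemeasurable ψ.continuous.measurable.aestronglyMeasurable]
    exact le_antisymm (hsnd_le i i₀ ψ) (hsnd_le i₀ i ψ)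
  have hprob : ∀ i, IsProbabilityMeasure (γ i) := fun i => ⟨by
    rw [← Set.preimage_univ (f := Prod.fst), ← Measure.map_apply measurable_fst .univ, hfst i]
    simp⟩
  have hcost : ∑ i, ENNReal.ofReal (l i) * ∫⁻ p, edist p.1 p.2 ∂(γ i) ≤ ENNReal.ofReal D := by
    have htrunc : ∀ n : ℕ, ∑ i, ENNReal.ofReal (l i) *
        ∫⁻ p, ENNReal.ofReal (min (dist p.1 p.2) n) ∂(γ i) ≤ ENNReal.ofReal D := fun n => by
      let d : X × X →ᵇ ℝ := BoundedContinuousFunction.ofNormedAddCommGroup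
        (fun p => min (dist p.1 p.2) n) (by fun_prop) n fun p => by
          rw [Real.norm_of_nonneg (le_min dist_nonneg n.cast_nonneg)]
          exact min_le_right _ _
      have hd0 : ∀ p, 0 ≤ d p := fun p => le_min dist_nonneg n.cast_nonneg
      have h := hγ (fun i => l i • d) D ⟨0, 0, 1, zero_le_one, fun i => integrable_zero _ _ _,
        by simp, fun i p => by
          simpa using mul_le_mul_of_nonneg_left (show d p ≤ dist p.1 p.2 from min_le_left _ _)
            (hl i).le,
        by simp⟩
      simp only [BoundedContinuousFunction.coe_smul, smul_eq_mul, integral_const_mul] at h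
      calc ∑ i, ENNReal.ofReal (l i) * ∫⁻ p, ENNReal.ofReal (d p) ∂(γ i)
          = ENNReal.ofReal (∑ i, l i * ∫ p, d p ∂(γ i)) := by
            rw [ENNReal.ofReal_sum_of_nonneg fun i _ =>
              mul_nonneg (hl i).le (integral_nonneg hd0)]
            refine Finset.sum_congr rfl fun i _ => ?_
            rw [ENNReal.ofReal_mul (hl i).le,
              ofReal_integral_eq_lintegral_ofReal (d.integrable (γ i)) (ae_of_all _ hd0)]
        _ ≤ ENNReal.ofReal D := ENNReal.ofReal_le_ofReal h
    refine le_of_tendsto' (x := atTop) (tendsto_finsetSum _ fun i _ => ENNReal.Tendsto.const_mul ?_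
      (Or.inr ENNReal.ofReal_ne_top)) htrunc
    refine lintegral_tendsto_of_tendsto_of_monotone (fun n => by fun_prop)
      (ae_of_all _ fun p m n hmn => by dsimp only; gcongr) (ae_of_all _ fun p => ?_)
    rw [edist_dist]
    obtain ⟨k, hk⟩ := exists_nat_ge (dist p.1 p.2)
    refine tendsto_const_nhds.congr' ((eventually_ge_atTop k).mono fun n hn => ?_)
    dsimp only
    rw [min_eq_left (hk.trans (by exact_mod_cast hn))]
  have hcost_ne : ∀ i, ENNReal.ofReal (l i) * ∫⁻ p, edist p.1 p.2 ∂(γ i) ≠ ⊤ := fun i =>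
    ne_top_of_le_ne_top (ENNReal.ofReal_ne_top (r := D)) <|
      (Finset.single_le_sum (f := fun i => ENNReal.ofReal (l i) * ∫⁻ p, edist p.1 p.2 ∂(γ i))
        (fun _ _ => zero_le) (Finset.mem_univ i)).trans hcost
  have hdist_ne : ∀ i, ∫⁻ p, edist p.1 p.2 ∂(γ i) ≠ ⊤ := fun i h =>
    hcost_ne i (by rw [h, ENNReal.mul_top (by simpa using hl i)])
  refine ⟨(γ i₀).map Prod.snd, ⟨Measure.isProbabilityMeasure_map measurable_snd.aemeasurable,
    fun x₀ => ?_⟩, ?_⟩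
  · have h1 : Integrable (fun p : X × X => dist x₀ p.1) (γ i₀) := by
      have h := (hν i₀).2 x₀
      rw [← hfst i₀] at h
      exact h.comp_measurable measurable_fst
    have h2 : Integrable (fun p : X × X => dist p.1 p.2) (γ i₀) := by
      refine ⟨by fun_prop, ?_⟩
      rw [hasFiniteIntegral_iff_ofReal (ae_of_all _ fun _ => dist_nonneg)]
      simpa only [← edist_dist] using (hdist_ne i₀).lt_top
    rw [integrable_map_measure (by fun_prop) measurable_snd.aemeasurable]
    refine (h1.add h2).mono' (by fun_prop) (ae_of_all _ fun p => ?_)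
    rw [Function.comp_apply, Real.norm_of_nonneg dist_nonneg]
    exact dist_triangle _ _ _
  · calc medCost l ν ((γ i₀).map Prod.snd)
        ≤ ∑ i, l i * (∫⁻ p, edist p.1 p.2 ∂(γ i)).toReal :=
          Finset.sum_le_sum fun i _ => mul_le_mul_of_nonneg_left
            (ENNReal.toReal_mono (hdist_ne i) (iInf₂_le _ ⟨hprob i, hfst i, hsnd i⟩)) (hl i).le
      _ = (∑ i, ENNReal.ofReal (l i) * ∫⁻ p, edist p.1 p.2 ∂(γ i)).toReal := by
          rw [ENNReal.toReal_sum fun i _ => hcost_ne i]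
          exact Finset.sum_congr rfl fun i _ => by
            rw [ENNReal.toReal_mul, ENNReal.toReal_ofReal (hl i).le]
      _ ≤ D := ENNReal.toReal_le_of_le_ofReal hD0 hcost

/-- Lipschitz (dual) formulation: the minimal value of the Wasserstein
median problem equals the supremum of `∑ᵢ ∫ uᵢ dνᵢ` over families `(uᵢ)` with `uᵢ`
`λᵢ`-Lipschitz and `∑ᵢ uᵢ ≤ 0`, and this supremum is attained. -/
theorem median_dual_lipschitz_formulation
    {X : Type*} [MetricSpace X] [ProperSpace X] [MeasurableSpace X] [BorelSpace X]
    {N : ℕ} (hN : 1 ≤ N) {l : Fin N → ℝ} (hl : memSimplex l)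
    (hlpos : ∀ i, 0 < l i) {ν : Fin N → Measure X} (hν : ∀ i, ν i ∈ P1 X) :
    ∃ u : Fin N → X → ℝ,
      (∀ i, LipschitzWith (l i).toNNReal (u i)) ∧
      (∀ x : X, ∑ i, u i x ≤ 0) ∧
      (∀ v : Fin N → X → ℝ, (∀ i, LipschitzWith (l i).toNNReal (v i)) →
        (∀ x : X, ∑ i, v i x ≤ 0) →
        ∑ i, ∫ x, v i x ∂(ν i) ≤ ∑ i, ∫ x, u i x ∂(ν i)) ∧
      (∀ μ ∈ P1 X, ∑ i, ∫ x, u i x ∂(ν i) ≤ medCost l ν μ) ∧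
      (∃ μ ∈ P1 X, medCost l ν μ = ∑ i, ∫ x, u i x ∂(ν i)) := by
  have : Nonempty (Fin N) := ⟨⟨0, hN⟩⟩
  obtain ⟨u, hu, hu0, hmax⟩ := exists_forall_sum_integral_le (fun i => (l i).toNNReal) hν
  obtain ⟨μ, hμ, hle⟩ := exists_mem_P1_medCost_le hN hlpos hν hmax
  exact ⟨u, hu, hu0, hmax, fun ρ hρ => sum_integral_le_medCost hlpos hν hu hu0 hρ, μ, hμ,
    hle.antisymm (sum_integral_le_medCost hlpos hν hu hu0 hμ)⟩
end
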